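/- Let p ≥ 2 and k ≥ 1 be integers, let f : Finset E → ℝ be non-negative, monotone, submodular, and let O be a finset with |O| ≤ k and f(O) = OPT. Let ∅ = S₀ ⊆ S₁ ⊆ ⋯ ⊆ S_p be finsets with |S_j| ≤ k for all j, such that for every 1 ≤ j ≤ p: (i) f(S_j) ≥ f(S_{j−1}) + (|S_j| − |S_{j−1}|) · (p/(p+1))^j · OPT/k; and (ii) if |S_j| < k then f(o|S_j) ≤ (p/(p+1))^j · OPT/k for every o ∈ O. Then for every 1 ≤ i ≤ p−1 and every real α ≥ 0, if |S_i| ≥ k·(i/p + α), then f(S_i) ≥ OPT · (1 − (p/(p+1))^i + α·(p/(p+1))^{i+1}). -/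

import Mathlib

open Finset

/-!
Write `q = p / (p + 1)`, so that `q / p = 1 - q`, and let `β j = |S j| / k - j / p` be the signed
surplus of the solution after pass `j` over the pace of `k / p` elements per pass. The invariant is

  `f (S j) ≥ OPT * (1 - q ^ j + β j * q ^ j)`.

It implies the slightly weaker `f (S j) ≥ OPT * (1 - q ^ j + β j * q ^ (j + 1))` when `β j ≥ 0`.
When `β j < 0` the solution is not full, so all marginal gains over `O` are small and
submodularity alone already gives `f (S j) ≥ OPT * (1 - q ^ j)`. In pass `j + 1` every element is
worth `q ^ (j + 1) * OPT / k`; since `q ^ (j + 1) / p = q ^ j - q ^ (j + 1)`, adding the gain of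
the pass cancels `β j` and restores the invariant at `j + 1`.
-/

section Submodular

variable {E R : Type*} [DecidableEq E] [AddCommGroup R]

/-- The marginal gain `f(e | X)` of adding the element `e` to the set `X`. -/
def marginalGain (f : Finset E → R) (X : Finset E) (e : E) : R :=
  f (insert e X) - f X

lemma marginalGain_of_mem (f : Finset E → R) {X : Finset E} {e : E} (he : e ∈ X) :
    marginalGain f X e = 0 := by
  rw [marginalGain, insert_eq_of_mem he, sub_self]

variable [PartialOrder R]

/-- Submodularity of a set function in its diminishing-returns form: the marginal gain of an
element outside `Y` does not increase when a subset of `Y` is enlarged to `Y`. -/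
def IsSubmodular (f : Finset E → R) : Prop :=
  ∀ X Y : Finset E, X ⊆ Y → ∀ e ∉ Y, marginalGain f Y e ≤ marginalGain f X e

variable [IsOrderedAddMonoid R] {f : Finset E → R}

lemma IsSubmodular.union_le_add_sum_marginalGain (hf : IsSubmodular f) (X Y : Finset E) :
    f (X ∪ Y) ≤ f X + ∑ e ∈ Y, marginalGain f X e := by
  induction Y using Finset.induction_on with
  | empty => simp
  | insert a Y ha ih =>
    rw [sum_insert ha, union_insert]
    by_cases haX : a ∈ X
    · rwa [insert_eq_of_mem (mem_union_left Y haX), marginalGain_of_mem f haX, zero_add]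
    · have hgain : marginalGain f (X ∪ Y) a ≤ marginalGain f X a :=
        hf X (X ∪ Y) subset_union_left a (by simp [haX, ha])
      calc f (insert a (X ∪ Y)) = marginalGain f (X ∪ Y) a + f (X ∪ Y) :=
            (sub_add_cancel _ _).symm
        _ ≤ marginalGain f X a + (f X + ∑ e ∈ Y, marginalGain f X e) := add_le_add hgain ih
        _ = f X + (marginalGain f X a + ∑ e ∈ Y, marginalGain f X e) := add_left_comm _ _ _

lemma IsSubmodular.le_add_nsmul_of_marginalGain_le (hf : IsSubmodular f) (hmono : Monotone f)
    {X Y : Finset E} {k : ℕ} {c : R} (hY : #Y ≤ k) (hc : 0 ≤ c)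
    (hgain : ∀ e ∈ Y, marginalGain f X e ≤ c) : f Y ≤ f X + k • c :=
  calc f Y ≤ f (X ∪ Y) := hmono subset_union_right
    _ ≤ f X + ∑ e ∈ Y, marginalGain f X e := hf.union_le_add_sum_marginalGain X Y
    _ ≤ f X + #Y • c := by gcongr; exact sum_le_card_nsmul Y _ c hgain
    _ ≤ f X + k • c := by gcongr

end Submodular

section Recursion

variable {R : Type*} [CommRing R] [LinearOrder R] [IsStrictOrderedRing R] {q M : R}

lemma one_sub_pow_add_mul_pow_succ_le (hq₀ : 0 ≤ q) (hq₁ : q ≤ 1) (hM : 0 ≤ M) {v β : R} {j : ℕ}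
    (hbound : M * (1 - q ^ j + β * q ^ j) ≤ v) (hdeficit : β < 0 → M * (1 - q ^ j) ≤ v) :
    M * (1 - q ^ j + β * q ^ (j + 1)) ≤ v := by
  rcases le_or_gt 0 β with hβ | hβ
  · refine le_trans ?_ hbound
    gcongr M * (1 - q ^ j + β * ?_)
    exact pow_le_pow_of_le_one hq₀ hq₁ j.le_succ
  · refine le_trans ?_ (hdeficit hβ)
    gcongr
    exact add_le_of_nonpos_right (mul_nonpos_of_nonpos_of_nonneg hβ.le (by positivity))

lemma one_sub_pow_add_mul_pow_le_of_gain (hq₀ : 0 ≤ q) (hq₁ : q ≤ 1) (hM : 0 ≤ M)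
    {v β : ℕ → R} {n : ℕ} (hzero : M * β 0 ≤ v 0)
    (hgain : ∀ j < n,
      v j + M * (q ^ j - q ^ (j + 1) + (β (j + 1) - β j) * q ^ (j + 1)) ≤ v (j + 1))
    (hdeficit : ∀ j < n, β j < 0 → M * (1 - q ^ j) ≤ v j) :
    ∀ j ≤ n, M * (1 - q ^ j + β j * q ^ j) ≤ v j := by
  intro j hj
  induction j with
  | zero => simpa using hzero
  | succ j ih =>
    have hprev : M * (1 - q ^ j + β j * q ^ (j + 1)) ≤ v j :=
      one_sub_pow_add_mul_pow_succ_le hq₀ hq₁ hM (ih (by omega)) (hdeficit j hj)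
    linarith [hgain j hj]

end Recursion

lemma div_add_one_pow_succ_div {K : Type*} [Field K] {p : K} (hp : p ≠ 0) (hp' : p + 1 ≠ 0)
    (j : ℕ) : (p / (p + 1)) ^ (j + 1) / p = (p / (p + 1)) ^ j - (p / (p + 1)) ^ (j + 1) := by
  rw [pow_succ]
  field_simp
  ring

section Passes

variable {E : Type*}

/-- The signed surplus of the solution `S j` after pass `j`, as a fraction of the capacity `k`,
over a pace of `k / p` elements per pass. -/
noncomputable def surplus (p k : ℕ) (S : ℕ → Finset E) (j : ℕ) : ℝ :=
  (#(S j) : ℝ) / k - (j : ℝ) / p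

variable {p k : ℕ} {S : ℕ → Finset E} {j : ℕ}

lemma surplus_zero (hS₀ : S 0 = ∅) : surplus p k S 0 = 0 := by
  simp [surplus, hS₀]

lemma surplus_succ_sub (p k : ℕ) (S : ℕ → Finset E) (j : ℕ) :
    surplus p k S (j + 1) - surplus p k S j = ((#(S (j + 1)) : ℝ) - #(S j)) / k - 1 / p := by
  simp only [surplus, Nat.cast_add_one]
  ring

lemma le_surplus_iff (hk : 0 < k) {α : ℝ} :
    α ≤ surplus p k S j ↔ (k : ℝ) * ((j : ℝ) / p + α) ≤ #(S j) := by
  rw [surplus, le_sub_iff_add_le', le_div_iff₀' (by positivity)]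

lemma card_lt_of_surplus_neg (hk : 0 < k) (hj : j ≤ p) (h : surplus p k S j < 0) :
    #(S j) < k := by
  have hpace : (j : ℝ) / p ≤ 1 := div_le_one_of_le₀ (by exact_mod_cast hj) p.cast_nonneg
  have hfrac : (#(S j) : ℝ) / k < 1 := (sub_neg.mp h).trans_le hpace
  exact_mod_cast (div_lt_one (by positivity)).mp hfrac

lemma card_sub_card_mul_eq_surplus (hp : 0 < p) (OPT : ℝ) :
    ((#(S (j + 1)) : ℝ) - #(S j)) * (((p : ℝ) / (p + 1)) ^ (j + 1) * OPT / k) =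
      OPT * (((p : ℝ) / (p + 1)) ^ j - ((p : ℝ) / (p + 1)) ^ (j + 1) +
        (surplus p k S (j + 1) - surplus p k S j) * ((p : ℝ) / (p + 1)) ^ (j + 1)) := by
  rw [surplus_succ_sub, ← div_add_one_pow_succ_div (by positivity) (by positivity)]
  ring

variable [DecidableEq E] {f : Finset E → ℝ} {O : Finset E} {OPT : ℝ}

lemma IsSubmodular.mul_one_sub_le_of_marginalGain_le (hf : IsSubmodular f) (hmono : Monotone f)
    (hk : 0 < k) (hO : #O ≤ k) {X : Finset E} {t : ℝ} (ht : 0 ≤ t * f O)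
    (hgain : ∀ o ∈ O, marginalGain f X o ≤ t * f O / k) : f O * (1 - t) ≤ f X := by
  have hopt : f O ≤ f X + k • (t * f O / k) :=
    hf.le_add_nsmul_of_marginalGain_le hmono hO (by positivity) hgain
  rw [nsmul_eq_mul, mul_div_cancel₀ _ (by positivity)] at hopt
  linarith

theorem stmt_4_general (hp : 1 ≤ p) (hk : 1 ≤ k) (hnonneg : ∀ X, 0 ≤ f X) (hmono : Monotone f)
    (hf : IsSubmodular f) (hO : #O ≤ k) (hOPT : f O = OPT) (hS₀ : S 0 = ∅)
    (hpass : ∀ j, 1 ≤ j → j ≤ p →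
      f (S j) ≥ f (S (j - 1)) +
        ((#(S j) : ℝ) - #(S (j - 1))) * (((p : ℝ) / (p + 1)) ^ j * OPT / k))
    (hsmall : ∀ j, 1 ≤ j → j ≤ p → #(S j) < k →
      ∀ o ∈ O, marginalGain f (S j) o ≤ ((p : ℝ) / (p + 1)) ^ j * OPT / k)
    {i : ℕ} (hi : i ≤ p) {α : ℝ} (hα : (k : ℝ) * ((i : ℝ) / p + α) ≤ #(S i)) :
    f (S i) ≥ OPT * (1 - ((p : ℝ) / (p + 1)) ^ i + α * ((p : ℝ) / (p + 1)) ^ (i + 1)) := by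
  subst hOPT
  have hO₀ : 0 ≤ f O := hnonneg O
  have hq₀ : 0 ≤ (p : ℝ) / (p + 1) := by positivity
  have hq₁ : (p : ℝ) / (p + 1) ≤ 1 := div_le_one_of_le₀ (by linarith) (by positivity)
  have hdeficit : ∀ j ≤ p, surplus p k S j < 0 →
      f O * (1 - ((p : ℝ) / (p + 1)) ^ j) ≤ f (S j) := by
    intro j hj hneg
    have hj₀ : j ≠ 0 := by
      rintro rfl
      exact hneg.ne (surplus_zero hS₀)
    exact hf.mul_one_sub_le_of_marginalGain_le hmono hk hO (by positivity)
      (hsmall j (Nat.one_le_iff_ne_zero.mpr hj₀) hj (card_lt_of_surplus_neg hk hj hneg))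
  have hbound : f O * (1 - ((p : ℝ) / (p + 1)) ^ i +
      surplus p k S i * ((p : ℝ) / (p + 1)) ^ i) ≤ f (S i) :=
    one_sub_pow_add_mul_pow_le_of_gain (v := fun j ↦ f (S j)) hq₀ hq₁ hO₀
      (by simpa [surplus_zero hS₀] using hnonneg (S 0))
      (fun j hj ↦ card_sub_card_mul_eq_surplus hp _ ▸ hpass (j + 1) j.succ_pos hj)
      (fun j hj ↦ hdeficit j hj.le) i hi
  calc f O * (1 - ((p : ℝ) / (p + 1)) ^ i + α * ((p : ℝ) / (p + 1)) ^ (i + 1))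
      ≤ f O * (1 - ((p : ℝ) / (p + 1)) ^ i +
          surplus p k S i * ((p : ℝ) / (p + 1)) ^ (i + 1)) := by
        gcongr
        exact (le_surplus_iff hk).mpr hα
    _ ≤ f (S i) := one_sub_pow_add_mul_pow_succ_le hq₀ hq₁ hO₀ hbound (hdeficit i hi)

end Passes

/-- Lemma "full early" of the p-pass analysis. -/
theorem stmt_4 {E : Type*} [DecidableEq E]
    (p k : ℕ) (hp : 2 ≤ p) (hk : 1 ≤ k)
    (f : Finset E → ℝ)
    (hnonneg : ∀ X : Finset E, 0 ≤ f X)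
    (hmono : ∀ X Y : Finset E, X ⊆ Y → f X ≤ f Y)
    (hsubmod : ∀ X Y : Finset E, X ⊆ Y → ∀ e ∉ Y,
      f (insert e Y) - f Y ≤ f (insert e X) - f X)
    (O : Finset E) (OPT : ℝ) (hOcard : O.card ≤ k) (hOPT : f O = OPT)
    (S : ℕ → Finset E) (hS0 : S 0 = ∅)
    (hchain : ∀ j, 1 ≤ j → j ≤ p → S (j - 1) ⊆ S j)
    (hcard : ∀ j, j ≤ p → (S j).card ≤ k)
    (h1 : ∀ j, 1 ≤ j → j ≤ p →
      f (S j) ≥ f (S (j - 1)) +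
        (((S j).card : ℝ) - ((S (j - 1)).card : ℝ)) *
          (((p : ℝ) / (p + 1)) ^ j * OPT / k))
    (h2 : ∀ j, 1 ≤ j → j ≤ p → (S j).card < k →
      ∀ o ∈ O, f (insert o (S j)) - f (S j) ≤ ((p : ℝ) / (p + 1)) ^ j * OPT / k) :
    ∀ i, 1 ≤ i → i ≤ p - 1 → ∀ α : ℝ, 0 ≤ α →
      (k : ℝ) * ((i : ℝ) / p + α) ≤ ((S i).card : ℝ) →
      f (S i) ≥ OPT * (1 - ((p : ℝ) / (p + 1)) ^ i + α * ((p : ℝ) / (p + 1)) ^ (i + 1)) :=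
  fun _ _ hi _ _ hα ↦ stmt_4_general (one_le_two.trans hp) hk hnonneg (fun X Y ↦ hmono X Y)
    hsubmod hOcard hOPT hS0 h1 h2 (hi.trans (p.sub_le 1)) hα
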